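/- Let P(z) = a_0 + a_1 z + a_2 z^2 be a complex polynomial of degree 2 all of whose zeros lie in |z| ≤ k with k ≥ 1. Then max_{|z|=1}|P′(z)| ≥ (1/(1+k^2))·(2 + (k^2|a_2| − |a_0|)/(k^2|a_2| + |a_0|))·max_{|z|=1}|P(z)| + (|a_1|/(k(1+k^2)))·(2 + (k^2|a_2| − |a_0|)/(k^2|a_2| + |a_0|))·((k−1)^2/2) + |a_1|·(1 − 1/k). -/

import Mathlib

open Polynomial Metric

/-- The maximum of `|P(z)|` over the circle `|z| = r`. -/
noncomputable def maxMod (P : Polynomial ℂ) (r : ℝ) : ℝ :=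
  ⨆ z : sphere (0 : ℂ) r, ‖P.eval (z : ℂ)‖

/-!
Since `P'` is affine, `max_{|z|=1} |P'(z)| = |a₁| + 2|a₂|`, while `max_{|z|=1} |P(z)|` is at most
`|a₀| + |a₁| + |a₂|`. Write `D = k²|a₂| + |a₀|` and `t = (k²|a₂| - |a₀|) / D`. With this bound for
`max |P|`, the right-hand side of the inequality becomes
`(2 + t) (|a₂| + |a₀|) / (1 + k²) + t |a₁| / (2k) + |a₁|`. If `z`, `w` are the roots of `P`, then
`|a₀| = |a₂||z||w| ≤ k²|a₂|` makes the first fraction at most `D / (2k²)`, and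
`(k - |z|) (k - |w|) ≥ 0` makes the second one at most `D / (2k²)`. As `(1 + t) D = 2k²|a₂|`, the
total is at most `2|a₂| + |a₁|`.
-/

section MaxMod

variable {P : ℂ[X]} {r M : ℝ}

theorem norm_eval_le_maxMod (P : ℂ[X]) {z : ℂ} (hz : ‖z‖ = r) : ‖P.eval z‖ ≤ maxMod P r := by
  have hcont : Continuous fun z : sphere (0 : ℂ) r ↦ ‖P.eval (z : ℂ)‖ := by fun_prop
  exact le_ciSup (isCompact_range hcont).bddAbove ⟨z, mem_sphere_zero_iff_norm.mpr hz⟩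

theorem maxMod_le (hr : 0 ≤ r) (h : ∀ z : ℂ, ‖z‖ = r → ‖P.eval z‖ ≤ M) : maxMod P r ≤ M := by
  have : Nonempty (sphere (0 : ℂ) r) := (NormedSpace.sphere_nonempty.mpr hr).to_subtype
  exact ciSup_le fun z ↦ h z (mem_sphere_zero_iff_norm.mp z.2)

theorem maxMod_le_sum_norm_coeff_mul_pow (P : ℂ[X]) (hr : 0 ≤ r) :
    maxMod P r ≤ ∑ i ∈ Finset.range (P.natDegree + 1), ‖P.coeff i‖ * r ^ i := by
  refine maxMod_le hr fun z hz ↦ ?_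
  rw [eval_eq_sum_range]
  exact (norm_sum_le _ _).trans_eq (by simp only [norm_mul, norm_pow, hz])

theorem exists_norm_eq_and_norm_add_mul_eq (a b : ℂ) (hr : 0 ≤ r) :
    ∃ z : ℂ, ‖z‖ = r ∧ ‖a + b * z‖ = ‖a‖ + ‖b‖ * r := by
  obtain ⟨u, hu, hau⟩ := Complex.exists_norm_mul_eq_self a
  obtain ⟨v, hv, hbv⟩ := Complex.exists_norm_mul_eq_self b
  have hv₀ : v ≠ 0 := norm_ne_zero_iff.mp (by simp [hv])
  have haligned : a + b * (r * (u / v)) = u * ((‖a‖ + ‖b‖ * r : ℝ) : ℂ) := by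
    conv_lhs => rw [← hau, ← hbv]
    push_cast
    field_simp
  refine ⟨r * (u / v), by simp [hu, hv, abs_of_nonneg hr], ?_⟩
  rw [haligned, norm_mul, hu, one_mul, Complex.norm_of_nonneg (by positivity)]

theorem maxMod_C_add_C_mul_X (a b : ℂ) (hr : 0 ≤ r) :
    maxMod (C a + C b * X) r = ‖a‖ + ‖b‖ * r := by
  apply le_antisymm
  · refine maxMod_le hr fun z hz ↦ ?_
    simpa [hz] using norm_add_le a (b * z)
  · obtain ⟨z, hz, hmax⟩ := exists_norm_eq_and_norm_add_mul_eq a b hr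
    calc ‖a‖ + ‖b‖ * r = ‖(C a + C b * X).eval z‖ := by simp [hmax]
      _ ≤ maxMod (C a + C b * X) r := norm_eval_le_maxMod _ hz

theorem maxMod_derivative_of_natDegree_le_two (hP : P.natDegree ≤ 2) (hr : 0 ≤ r) :
    maxMod (derivative P) r = ‖P.coeff 1‖ + 2 * ‖P.coeff 2‖ * r := by
  have hdeg : (derivative P).natDegree ≤ 1 :=
    (natDegree_derivative_le P).trans (Nat.sub_le_of_le_add hP)
  have hderiv : derivative P = C (P.coeff 1) + C (P.coeff 2 * 2) * X := by
    rw [eq_X_add_C_of_natDegree_le_one hdeg, coeff_derivative, coeff_derivative, add_comm]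
    norm_num
  rw [hderiv, maxMod_C_add_C_mul_X _ _ hr, norm_mul, Complex.norm_two, mul_comm ‖P.coeff 2‖]

end MaxMod

section Roots

variable {K : Type*} [NormedField K] {P : K[X]} {k : ℝ}

theorem norm_coeff_zero_le_pow_mul_norm_leadingCoeff (hP : P.Splits)
    (hroots : ∀ z ∈ P.roots, ‖z‖ ≤ k) :
    ‖P.coeff 0‖ ≤ k ^ P.natDegree * ‖P.leadingCoeff‖ := by
  have hprod : ‖P.roots.prod‖ ≤ k ^ P.natDegree := by
    rw [hP.natDegree_eq_card_roots, ← normHom_apply, map_multiset_prod]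
    exact Multiset.prod_map_le_pow_card (by simp) (by simpa using hroots)
  rw [hP.coeff_zero_eq_leadingCoeff_mul_prod_roots]
  simpa [mul_comm] using mul_le_mul_of_nonneg_right hprod (norm_nonneg P.leadingCoeff)

theorem mul_norm_coeff_one_le_of_natDegree_eq_two (hP : P.Splits) (hdeg : P.natDegree = 2)
    (hroots : ∀ z ∈ P.roots, ‖z‖ ≤ k) :
    k * ‖P.coeff 1‖ ≤ k ^ 2 * ‖P.coeff 2‖ + ‖P.coeff 0‖ := by
  obtain ⟨z, w, hzw⟩ := Multiset.card_eq_two.mp (hP.natDegree_eq_card_roots.symm.trans hdeg)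
  have hz : ‖z‖ ≤ k := hroots z (by simp [hzw])
  have hw : ‖w‖ ≤ k := hroots w (by simp [hzw])
  have hk : 0 ≤ k := (norm_nonneg z).trans hz
  have hlead : P.leadingCoeff = P.coeff 2 := by rw [leadingCoeff, hdeg]
  have hcoeff_zero : ‖P.coeff 0‖ = ‖P.coeff 2‖ * (‖z‖ * ‖w‖) := by
    rw [hP.coeff_zero_eq_leadingCoeff_mul_prod_roots]
    simp [hzw, hlead, hdeg]
  have hcoeff_one : ‖P.coeff 1‖ = ‖P.coeff 2‖ * ‖z + w‖ := by
    have hnext : P.nextCoeff = P.coeff 1 := by simp [nextCoeff, hdeg]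
    rw [← hnext, hP.nextCoeff_eq_neg_sum_roots_mul_leadingCoeff]
    simp [hzw, hlead]
  have hsum : k * (‖z‖ + ‖w‖) ≤ k ^ 2 + ‖z‖ * ‖w‖ := by
    linarith [mul_nonneg (sub_nonneg.mpr hz) (sub_nonneg.mpr hw)]
  calc k * ‖P.coeff 1‖ = ‖P.coeff 2‖ * (k * ‖z + w‖) := by rw [hcoeff_one]; ring
    _ ≤ ‖P.coeff 2‖ * (k * (‖z‖ + ‖w‖)) := by gcongr; exact norm_add_le z w
    _ ≤ ‖P.coeff 2‖ * (k ^ 2 + ‖z‖ * ‖w‖) := by gcongr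
    _ = k ^ 2 * ‖P.coeff 2‖ + ‖P.coeff 0‖ := by rw [hcoeff_zero]; ring

end Roots

section RealInequality

variable {A B c k M : ℝ}

theorem add_div_one_add_sq_le (hk : 1 ≤ k) (hc : c ≤ k ^ 2 * A) :
    (A + c) / (1 + k ^ 2) ≤ (k ^ 2 * A + c) / (2 * k ^ 2) := by
  have hk_sq : 0 ≤ k ^ 2 - 1 := sub_nonneg.mpr (one_le_pow₀ hk)
  rw [div_le_div_iff₀ (by positivity) (by positivity)]
  linarith [mul_nonneg hk_sq (sub_nonneg.mpr hc)]

theorem lower_bound_le_two_mul_add (hk : 1 ≤ k) (hD : 0 < k ^ 2 * A + c) (hc : c ≤ k ^ 2 * A)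
    (hB : k * B ≤ k ^ 2 * A + c) (hM : M ≤ A + B + c) :
    (1 / (1 + k ^ 2)) * (2 + (k ^ 2 * A - c) / (k ^ 2 * A + c)) * M +
        (B / (k * (1 + k ^ 2))) * (2 + (k ^ 2 * A - c) / (k ^ 2 * A + c)) * ((k - 1) ^ 2 / 2) +
        B * (1 - 1 / k) ≤
      2 * A + B := by
  set t := (k ^ 2 * A - c) / (k ^ 2 * A + c) with ht_def
  have hk₀ : 0 < k := one_pos.trans_le hk
  have ht : 0 ≤ t := div_nonneg (sub_nonneg.mpr hc) hD.le
  have hB_div : B / (2 * k) ≤ (k ^ 2 * A + c) / (2 * k ^ 2) := by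
    calc B / (2 * k) = k * B / (2 * k ^ 2) := by field_simp
      _ ≤ (k ^ 2 * A + c) / (2 * k ^ 2) := by gcongr
  have ht_mul : (1 + t) * (k ^ 2 * A + c) = 2 * k ^ 2 * A := by
    rw [ht_def, add_mul, div_mul_cancel₀ _ hD.ne']
    ring
  calc (1 / (1 + k ^ 2)) * (2 + t) * M + (B / (k * (1 + k ^ 2))) * (2 + t) * ((k - 1) ^ 2 / 2) +
        B * (1 - 1 / k)
    _ ≤ (1 / (1 + k ^ 2)) * (2 + t) * (A + B + c) +
          (B / (k * (1 + k ^ 2))) * (2 + t) * ((k - 1) ^ 2 / 2) + B * (1 - 1 / k) := by gcongr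
    _ = (2 + t) * ((A + c) / (1 + k ^ 2)) + t * (B / (2 * k)) + B := by field_simp; ring
    _ ≤ (2 + t) * ((k ^ 2 * A + c) / (2 * k ^ 2)) + t * ((k ^ 2 * A + c) / (2 * k ^ 2)) + B := by
      gcongr (2 + t) * ?_ + t * ?_ + B
      exact add_div_one_add_sq_le hk hc
    _ = (1 + t) * (k ^ 2 * A + c) / k ^ 2 + B := by ring
    _ = 2 * A + B := by rw [ht_mul]; field_simp

end RealInequality

theorem stmt_1 (a₀ a₁ a₂ : ℂ) (ha₂ : a₂ ≠ 0) (P : Polynomial ℂ)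
    (hP : P = C a₀ + C a₁ * X + C a₂ * X ^ 2)
    (k : ℝ) (hk : 1 ≤ k) (hroots : ∀ w : ℂ, P.IsRoot w → ‖w‖ ≤ k) :
    maxMod (Polynomial.derivative P) 1 ≥
      (1 / (1 + k ^ 2)) *
          (2 + (k ^ 2 * ‖a₂‖ - ‖a₀‖) /
              (k ^ 2 * ‖a₂‖ + ‖a₀‖)) *
          maxMod P 1 +
        (‖a₁‖ / (k * (1 + k ^ 2))) *
          (2 + (k ^ 2 * ‖a₂‖ - ‖a₀‖) /
              (k ^ 2 * ‖a₂‖ + ‖a₀‖)) *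
          ((k - 1) ^ 2 / 2) +
        ‖a₁‖ * (1 - 1 / k) := by
  have hdeg : P.natDegree = 2 := by rw [hP]; compute_degree!
  have hcoeff₀ : P.coeff 0 = a₀ := by simp [hP]
  have hcoeff₁ : P.coeff 1 = a₁ := by simp [hP, coeff_X_pow]
  have hcoeff₂ : P.coeff 2 = a₂ := by simp [hP]
  have hsplits : P.Splits := IsAlgClosed.splits P
  have hroots' : ∀ z ∈ P.roots, ‖z‖ ≤ k := fun z hz ↦ hroots z (isRoot_of_mem_roots hz)
  have hmax : maxMod P 1 ≤ ‖a₂‖ + ‖a₁‖ + ‖a₀‖ := by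
    have h := maxMod_le_sum_norm_coeff_mul_pow P zero_le_one
    simp only [hdeg, Finset.sum_range_succ, Finset.sum_range_zero, hcoeff₀, hcoeff₁, hcoeff₂,
      one_pow, mul_one, zero_add] at h
    linarith
  have hconst : ‖a₀‖ ≤ k ^ 2 * ‖a₂‖ := by
    simpa [leadingCoeff, hdeg, hcoeff₀, hcoeff₂] using
      norm_coeff_zero_le_pow_mul_norm_leadingCoeff hsplits hroots'
  have hlinear : k * ‖a₁‖ ≤ k ^ 2 * ‖a₂‖ + ‖a₀‖ := by
    simpa [hcoeff₀, hcoeff₁, hcoeff₂] using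
      mul_norm_coeff_one_le_of_natDegree_eq_two hsplits hdeg hroots'
  rw [maxMod_derivative_of_natDegree_le_two hdeg.le zero_le_one, hcoeff₁, hcoeff₂, mul_one,
    add_comm]
  exact lower_bound_le_two_mul_add hk (by positivity) hconst hlinear hmax
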